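/- Let n ≥ 2 and 0 < D < π, and let C ⊆ S^n be a D-maximal set. Then for every z ∈ ∂C (boundary taken in S^n) there exists y ∈ ∂C with d(z,y) = D. -/

import Mathlib

open MeasureTheory

noncomputable section

/-- Euclidean space `ℝ^{n+1}`. -/
abbrev Esp (n : ℕ) : Type := EuclideanSpace ℝ (Fin (n + 1))

/-- The unit sphere `S^n ⊆ ℝ^{n+1}`, as a subtype. -/
abbrev Sph (n : ℕ) : Type := Metric.sphere (0 : Esp n) 1

/-- Geodesic distance `d(x,y) = arccos ⟨x,y⟩` on the sphere. -/
def gd {n : ℕ} (x y : Sph n) : ℝ :=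
  Real.arccos (inner (𝕜 := ℝ) (x : Esp n) (y : Esp n))

/-- Closed geodesic ball `B(z,r) = {x ∈ Sⁿ : d(x,z) ≤ r}`. -/
def sphBall {n : ℕ} (z : Sph n) (r : ℝ) : Set (Sph n) := {x | gd x z ≤ r}

/-- Geodesic diameter `diam X = sup {d(x,y) : x, y ∈ X}`. -/
def sphDiam {n : ℕ} (X : Set (Sph n)) : ℝ :=
  sSup {r | ∃ x ∈ X, ∃ y ∈ X, r = gd x y}

/-- Spherical volume: the `n`-dimensional (Hausdorff) surface measure on `S^n`. -/
def sphVol (n : ℕ) : Measure (Sph n) := μH[(n : ℝ)]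

/-- A set `C ⊆ S^n` is `D`-maximal: compact, of geodesic diameter at most `D`, and of
maximal spherical volume among compact sets of diameter at most `D`. -/
def DMaximal (n : ℕ) (D : ℝ) (C : Set (Sph n)) : Prop :=
  IsCompact C ∧ sphDiam C ≤ D ∧
    sphVol n C =
      sSup {v | ∃ X : Set (Sph n), IsCompact X ∧ sphDiam X ≤ D ∧ v = sphVol n X}

/-!
Let `y` be a point of `C` farthest from `z`. If `d(z, y) < D`, then by the triangle inequality a
small closed ball around `z` can be adjoined to `C` without raising the diameter above `D`. As `z`
is a frontier point, this adds a nonempty open set and so strictly increases the volume, contrary to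
maximality. Hence `d(z, y) = D`. Moreover `y` is not interior to `C`, since otherwise the height
function `⟪z, ·⟫` on the sphere would have a local minimum at `y`; by Lagrange multipliers its only
critical points are `± z`, at distance `0` and `π` from `z`.

The strict increase of volume rests on the Hausdorff measure `μH[n]` of `S^n` being finite and
positive on nonempty open sets. Both properties pass from the Haar measure `μH[n]` of an
`n`-dimensional space through stereographic projection, which is locally Lipschitz in both
directions.
-/

open Metric Module Set Filter Topology
open scoped NNReal RealInnerProductSpace

section LocallyLipschitzCharts

variable {X Y : Type*} [EMetricSpace X] [MeasurableSpace X] [BorelSpace X]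
  [EMetricSpace Y] [MeasurableSpace Y] [BorelSpace Y]
  {d : ℝ} {e : OpenPartialHomeomorph X Y} {p : X}

lemma hausdorffMeasure_finiteAt_nhds_of_locallyLipschitzOn_symm
    [IsLocallyFiniteMeasure (μH[d] : Measure Y)] (hd : 0 ≤ d)
    (he : LocallyLipschitzOn e.target e.symm) (hp : p ∈ e.source) :
    (μH[d] : Measure X).FiniteAtFilter (𝓝 p) := by
  obtain ⟨K, t, ht, hK⟩ := he (e.map_source hp)
  rw [e.open_target.nhdsWithin_eq (e.map_source hp)] at ht
  obtain ⟨u, hu, hu_fin⟩ := (μH[d] : Measure Y).finiteAt_nhds (e p)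
  refine ⟨e.symm '' (t ∩ u), ?_, ?_⟩
  · simpa only [e.left_inv hp] using
      e.symm.image_mem_nhds (e.map_source hp) (inter_mem ht hu)
  · calc μH[d] (e.symm '' (t ∩ u))
        ≤ (K : ENNReal) ^ d * μH[d] (t ∩ u) :=
          (hK.mono inter_subset_left).hausdorffMeasure_image_le hd
      _ < ⊤ := ENNReal.mul_lt_top (ENNReal.rpow_lt_top_of_nonneg hd ENNReal.coe_ne_top)
          ((measure_mono inter_subset_right).trans_lt hu_fin)

lemma hausdorffMeasure_pos_of_locallyLipschitzOn [(μH[d] : Measure Y).IsOpenPosMeasure]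
    (hd : 0 ≤ d) (he : LocallyLipschitzOn e.source e) (hp : p ∈ e.source) {U : Set X}
    (hU : U ∈ 𝓝 p) : 0 < μH[d] U := by
  obtain ⟨K, t, ht, hK⟩ := he hp
  rw [e.open_source.nhdsWithin_eq hp] at ht
  have h_image : 0 < μH[d] (e '' (t ∩ U)) :=
    Measure.measure_pos_of_mem_nhds _ (e.image_mem_nhds hp (inter_mem ht hU))
  have h_le : μH[d] (e '' (t ∩ U)) ≤ (K : ENNReal) ^ d * μH[d] (t ∩ U) :=
    (hK.mono inter_subset_left).hausdorffMeasure_image_le hd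
  have h_inter : 0 < μH[d] (t ∩ U) := pos_of_mul_pos_right (h_image.trans_le h_le) zero_le
  exact h_inter.trans_le (measure_mono inter_subset_right)

end LocallyLipschitzCharts

lemma isLocalExtrOn_of_isLocalExtr_subtype {X β : Type*} [TopologicalSpace X] [Preorder β]
    {f : X → β} {s : Set X} {a : s} (h : IsLocalExtr (fun x : s => f x) a) :
    IsLocalExtrOn f s a := by
  simpa only [IsLocalExtrOn, IsLocalExtr, IsExtrFilter, IsMinFilter, IsMaxFilter,
    ← map_nhds_subtype_val, eventually_map] using h

section UnitSphere

variable {E : Type*} [NormedAddCommGroup E] [InnerProductSpace ℝ E]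

lemma locallyLipschitzOn_stereographic {v : E} (hv : ‖v‖ = 1) :
    LocallyLipschitzOn (stereographic hv).source (stereographic hv) := by
  intro p hp
  have hpv : innerSL ℝ v (p : E) ≠ 1 := fun h =>
    hp (Subtype.ext ((inner_eq_one_iff_of_norm_eq_one hv (norm_eq_of_mem_sphere p)).1 h).symm)
  have h_diff : ContDiffAt ℝ 1 (stereoToFun v) (p : E) :=
    contDiffOn_stereoToFun.contDiffAt
      ((isOpen_ne_fun (innerSL ℝ v).continuous continuous_const).mem_nhds hpv)
  obtain ⟨K, t, ht, hK⟩ := h_diff.exists_lipschitzOnWith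
  exact ⟨K, Subtype.val ⁻¹' t, nhdsWithin_le_nhds (continuous_subtype_val.continuousAt ht),
    fun x hx y hy => hK hx hy⟩

lemma locallyLipschitz_stereographic_symm {v : E} (hv : ‖v‖ = 1) :
    LocallyLipschitz (stereographic hv).symm := by
  have h_diff : ContDiff ℝ 1 fun w : (ℝ ∙ v)ᗮ => stereoInvFunAux v (w : E) :=
    contDiff_stereoInvFunAux.comp (ℝ ∙ v)ᗮ.subtypeL.contDiff
  intro w
  obtain ⟨K, t, ht, hK⟩ := h_diff.locallyLipschitz w
  exact ⟨K, t, ht, fun x hx y hy => hK hx hy⟩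

lemma mem_stereographic_neg_source (p : sphere (0 : E) 1) :
    p ∈ (stereographic (norm_eq_of_mem_sphere (-p))).source :=
  ne_neg_of_mem_unit_sphere ℝ p

lemma mem_span_singleton_of_isLocalExtrOn_inner [CompleteSpace E] {z y : E} (hy : y ≠ 0)
    (h : IsLocalExtrOn (fun x => ⟪z, x⟫) (sphere 0 ‖y‖) y) : z ∈ ℝ ∙ y := by
  have h_sphere : sphere (0 : E) ‖y‖ = {x | ‖x‖ ^ 2 = ‖y‖ ^ 2} := by
    ext x
    simp
  have h_level : IsLocalExtrOn (innerSL ℝ z) {x | ‖x‖ ^ 2 = ‖y‖ ^ 2} y := h_sphere ▸ h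
  obtain ⟨a, b, hab, h_crit⟩ := h_level.exists_multipliers_of_hasStrictFDerivAt_1d
    (hasStrictFDerivAt_norm_sq y) (innerSL ℝ z).hasStrictFDerivAt
  have h_eq : (a * 2) • y + b • z = 0 := by
    refine ext_inner_right ℝ fun x => ?_
    simpa [inner_add_left, real_inner_smul_left, mul_assoc] using DFunLike.congr_fun h_crit x
  have hb : b ≠ 0 := by
    rintro rfl
    exact hab (by simpa [hy] using h_eq)
  refine Submodule.mem_span_singleton.2 ⟨-(b⁻¹ * (a * 2)), ?_⟩
  rw [neg_smul, mul_smul, eq_neg_of_add_eq_zero_left h_eq, smul_neg, neg_neg, inv_smul_smul₀ hb]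

lemma eq_or_eq_neg_of_isLocalExtr_inner [CompleteSpace E] {z y : sphere (0 : E) 1}
    (h : IsLocalExtr (fun x : sphere (0 : E) 1 => ⟪(z : E), (x : E)⟫) y) : z = y ∨ z = -y := by
  have h_on : IsLocalExtrOn (fun x => ⟪(z : E), x⟫) (sphere 0 ‖(y : E)‖) y := by
    simpa only [norm_eq_of_mem_sphere] using isLocalExtrOn_of_isLocalExtr_subtype h
  obtain ⟨r, hr⟩ := Submodule.mem_span_singleton.1
    (mem_span_singleton_of_isLocalExtrOn_inner (ne_zero_of_mem_unit_sphere y) h_on)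
  have hr_abs : |r| = 1 := by
    simpa [norm_smul] using congrArg norm hr
  rcases eq_or_eq_neg_of_abs_eq hr_abs with rfl | rfl
  · exact .inl (Subtype.ext (by simpa using hr.symm))
  · exact .inr (Subtype.ext (by simpa using hr.symm))

variable [MeasurableSpace E] [BorelSpace E] {n : ℕ} [Fact (finrank ℝ E = n + 1)]

lemma isAddHaarMeasure_hausdorffMeasure_orthogonal_span_singleton {v : E} (hv : v ≠ 0) :
    (μH[n] : Measure (ℝ ∙ v)ᗮ).IsAddHaarMeasure := by
  have : FiniteDimensional ℝ E := .of_fact_finrank_eq_succ n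
  rw [← Submodule.finrank_orthogonal_span_singleton (𝕜 := ℝ) (n := n) hv]
  exact isAddHaarMeasure_hausdorffMeasure

variable (E n)

lemma isFiniteMeasure_hausdorffMeasure_sphere :
    IsFiniteMeasure (μH[n] : Measure (sphere (0 : E) 1)) := by
  have : FiniteDimensional ℝ E := .of_fact_finrank_eq_succ n
  have : IsLocallyFiniteMeasure (μH[n] : Measure (sphere (0 : E) 1)) := ⟨fun p => by
    have := isAddHaarMeasure_hausdorffMeasure_orthogonal_span_singleton (n := n)
      (ne_zero_of_mem_unit_sphere (-p))
    exact hausdorffMeasure_finiteAt_nhds_of_locallyLipschitzOn_symm n.cast_nonneg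
      (locallyLipschitz_stereographic_symm _).locallyLipschitzOn (mem_stereographic_neg_source p)⟩
  infer_instance

lemma isOpenPosMeasure_hausdorffMeasure_sphere :
    (μH[n] : Measure (sphere (0 : E) 1)).IsOpenPosMeasure := by
  refine ⟨fun U hU ⟨p, hp⟩ => ?_⟩
  have : FiniteDimensional ℝ E := .of_fact_finrank_eq_succ n
  have := isAddHaarMeasure_hausdorffMeasure_orthogonal_span_singleton (n := n)
    (ne_zero_of_mem_unit_sphere (-p))
  exact (hausdorffMeasure_pos_of_locallyLipschitzOn n.cast_nonneg
    (locallyLipschitzOn_stereographic _) (mem_stereographic_neg_source p) (hU.mem_nhds hp)).ne'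

end UnitSphere

lemma measure_lt_measure_union_of_mem_frontier {X : Type*} [TopologicalSpace X] [MeasurableSpace X]
    [OpensMeasurableSpace X] {μ : Measure X} [μ.IsOpenPosMeasure] {C s : Set X} {z : X}
    (hC : IsClosed C) (hμC : μ C ≠ ⊤) (hz : z ∈ frontier C) (hs : s ∈ 𝓝 z) :
    μ C < μ (C ∪ s) := by
  set U := interior s ∩ Cᶜ
  have hU : IsOpen U := isOpen_interior.inter hC.isOpen_compl
  have hU_ne : U.Nonempty := by
    rw [frontier_eq_closure_inter_closure] at hz
    exact mem_closure_iff.1 hz.2 _ isOpen_interior (mem_interior_iff_mem_nhds.2 hs)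
  calc μ C < μ C + μ U := ENNReal.lt_add_right hμC (hU.measure_pos μ hU_ne).ne'
    _ = μ (C ∪ U) :=
      (measure_union (disjoint_compl_right.mono_right inter_subset_right) hU.measurableSet).symm
    _ ≤ μ (C ∪ s) :=
      measure_mono (union_subset_union_right C (inter_subset_left.trans interior_subset))

section GeodesicDistance

variable {n : ℕ} {C X : Set (Sph n)} {D ε : ℝ}

instance isFiniteMeasure_sphVol : IsFiniteMeasure (sphVol n) :=
  have : Fact (finrank ℝ (Esp n) = n + 1) := ⟨finrank_euclideanSpace_fin⟩
  isFiniteMeasure_hausdorffMeasure_sphere (Esp n) n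

instance isOpenPosMeasure_sphVol : (sphVol n).IsOpenPosMeasure :=
  have : Fact (finrank ℝ (Esp n) = n + 1) := ⟨finrank_euclideanSpace_fin⟩
  isOpenPosMeasure_hausdorffMeasure_sphere (Esp n) n

lemma gd_eq_angle (x y : Sph n) : gd x y = InnerProductGeometry.angle (x : Esp n) (y : Esp n) := by
  simp [gd, InnerProductGeometry.angle]

lemma cos_gd (x y : Sph n) : Real.cos (gd x y) = ⟪(x : Esp n), (y : Esp n)⟫ := by
  simp [gd_eq_angle, InnerProductGeometry.cos_angle]

lemma gd_nonneg (x y : Sph n) : 0 ≤ gd x y :=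
  Real.arccos_nonneg _

lemma gd_le_pi (x y : Sph n) : gd x y ≤ Real.pi :=
  Real.arccos_le_pi _

lemma gd_self (x : Sph n) : gd x x = 0 := by
  simp [gd]

lemma gd_neg_self (x : Sph n) : gd (-x) x = Real.pi := by
  simp [gd]

lemma gd_comm (x y : Sph n) : gd x y = gd y x := by
  simp only [gd, real_inner_comm]

lemma gd_triangle (x y z : Sph n) : gd x z ≤ gd x y + gd y z := by
  simpa only [gd_eq_angle] using InnerProductGeometry.angle_le_angle_add_angle _ _ _

lemma continuous_gd (z : Sph n) : Continuous (gd z) := by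
  unfold gd
  fun_prop

lemma gd_eq_zero_or_pi_of_isLocalMax {z y : Sph n} (h : IsLocalMax (gd z) y) :
    gd z y = 0 ∨ gd z y = Real.pi := by
  have h_min : IsLocalMin (fun x : Sph n => ⟪(z : Esp n), (x : Esp n)⟫) y :=
    h.mono fun x hx => by
      simpa only [cos_gd] using
        Real.cos_le_cos_of_nonneg_of_le_pi (gd_nonneg z x) (gd_le_pi z y) hx
  rcases eq_or_eq_neg_of_isLocalExtr_inner (.inl h_min) with rfl | rfl
  · exact .inl (gd_self z)
  · exact .inr (gd_neg_self y)

lemma mem_frontier_of_isMaxOn_gd {z y : Sph n} (hy : y ∈ C) (h : IsMaxOn (gd z) C y)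
    (h_pos : 0 < gd z y) (h_lt : gd z y < Real.pi) : y ∈ frontier C := by
  refine ⟨subset_closure hy, fun hy_int => ?_⟩
  rcases gd_eq_zero_or_pi_of_isLocalMax (h.isLocalMax (mem_interior_iff_mem_nhds.1 hy_int)) with
    h_zero | h_pi
  · exact h_pos.ne' h_zero
  · exact h_lt.ne h_pi

lemma mem_sphBall_iff {x z : Sph n} : x ∈ sphBall z ε ↔ gd z x ≤ ε := by
  rw [gd_comm]
  rfl

lemma isClosed_sphBall (z : Sph n) (ε : ℝ) : IsClosed (sphBall z ε) := by
  simpa only [preimage, mem_Iic, ← mem_sphBall_iff, ofPred_mem_eq] using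
    isClosed_Iic.preimage (continuous_gd z)

lemma sphBall_mem_nhds (z : Sph n) (hε : 0 < ε) : sphBall z ε ∈ 𝓝 z := by
  have h_lt : ∀ᶠ x in 𝓝 z, gd z x < ε :=
    (continuous_gd z).continuousAt.eventually_lt_const (by rwa [gd_self])
  exact h_lt.mono fun x hx => mem_sphBall_iff.2 hx.le

lemma gd_le_sphDiam {x y : Sph n} (hx : x ∈ X) (hy : y ∈ X) : gd x y ≤ sphDiam X := by
  refine le_csSup ⟨Real.pi, ?_⟩ ⟨x, hx, y, hy, rfl⟩
  rintro _ ⟨a, -, b, -, rfl⟩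
  exact gd_le_pi a b

lemma sphDiam_le (hD : 0 ≤ D) (h : ∀ x ∈ X, ∀ y ∈ X, gd x y ≤ D) : sphDiam X ≤ D := by
  refine Real.sSup_le ?_ hD
  rintro _ ⟨x, hx, y, hy, rfl⟩
  exact h x hx y hy

lemma sphDiam_union_sphBall_le {z : Sph n} (hD : 0 ≤ D) (hC : sphDiam C ≤ D) (hε : ε + ε ≤ D)
    (hz : ∀ x ∈ C, gd z x + ε ≤ D) : sphDiam (C ∪ sphBall z ε) ≤ D := by
  have h_via : ∀ x, ∀ y ∈ sphBall z ε, gd x y ≤ gd z x + ε := fun x y hy =>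
    calc gd x y ≤ gd x z + gd z y := gd_triangle x z y
      _ ≤ gd z x + ε := add_le_add (gd_comm x z).le (mem_sphBall_iff.1 hy)
  refine sphDiam_le hD ?_
  rintro x (hx | hx) y (hy | hy)
  · exact (gd_le_sphDiam hx hy).trans hC
  · exact (h_via x y hy).trans (hz x hx)
  · rw [gd_comm]
    exact (h_via y x hx).trans (hz y hy)
  · exact (h_via x y hy).trans ((add_le_add_left (mem_sphBall_iff.1 hx) ε).trans hε)

end GeodesicDistance

namespace DMaximal

variable {n : ℕ} {D : ℝ} {C : Set (Sph n)}

lemma isCompact (hC : DMaximal n D C) : IsCompact C :=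
  hC.1

lemma sphDiam_le (hC : DMaximal n D C) : sphDiam C ≤ D :=
  hC.2.1

lemma sphVol_le (hC : DMaximal n D C) {X : Set (Sph n)} (hX : IsCompact X) (hXD : sphDiam X ≤ D) :
    sphVol n X ≤ sphVol n C := by
  rw [hC.2.2]
  exact le_sSup ⟨X, hX, hXD, rfl⟩

lemma eq_of_isMaxOn_gd (hC : DMaximal n D C) {z y : Sph n} (hz : z ∈ frontier C) (hy : y ∈ C)
    (hy_max : IsMaxOn (gd z) C y) : gd z y = D := by
  have hzC : z ∈ C := hC.isCompact.isClosed.frontier_subset hz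
  refine ((gd_le_sphDiam hzC hy).trans hC.sphDiam_le).eq_of_not_lt fun h_lt => ?_
  have hD : 0 < D := (gd_nonneg z y).trans_lt h_lt
  obtain ⟨ε, hε, hε_le⟩ := exists_between (lt_min (half_pos hD) (sub_pos.2 h_lt))
  obtain ⟨hεD, hεy⟩ := lt_min_iff.1 hε_le
  have h_diam : sphDiam (C ∪ sphBall z ε) ≤ D :=
    sphDiam_union_sphBall_le hD.le hC.sphDiam_le (by linarith) fun x hx => by
      linarith [isMaxOn_iff.1 hy_max x hx]
  exact (hC.sphVol_le (hC.isCompact.union (isClosed_sphBall z ε).isCompact) h_diam).not_gt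
    (measure_lt_measure_union_of_mem_frontier hC.isCompact.isClosed (measure_ne_top _ C) hz
      (sphBall_mem_nhds z hε))

end DMaximal

theorem DMaximal_boundary_diametral_general (n : ℕ) (D : ℝ) (hD0 : 0 < D) (hD1 : D < Real.pi)
    (C : Set (Sph n)) (hC : DMaximal n D C) (z : Sph n) (hz : z ∈ frontier C) :
    ∃ y ∈ frontier C, gd z y = D := by
  have hzC : z ∈ C := hC.isCompact.isClosed.frontier_subset hz
  obtain ⟨y, hy, hy_max⟩ := hC.isCompact.exists_isMaxOn ⟨z, hzC⟩ (continuous_gd z).continuousOn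
  have hyD : gd z y = D := hC.eq_of_isMaxOn_gd hz hy hy_max
  exact ⟨y, mem_frontier_of_isMaxOn_gd hy hy_max (hyD ▸ hD0) (hyD ▸ hD1), hyD⟩

/-- every boundary point of a `D`-maximal set has a boundary point at
geodesic distance exactly `D`. -/
theorem DMaximal_boundary_diametral (n : ℕ) (hn : 2 ≤ n) (D : ℝ) (hD0 : 0 < D)
    (hD1 : D < Real.pi) (C : Set (Sph n)) (hC : DMaximal n D C)
    (z : Sph n) (hz : z ∈ frontier C) :
    ∃ y ∈ frontier C, gd z y = D :=
  DMaximal_boundary_diametral_general n D hD0 hD1 C hC z hz
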